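/- Let (F_0, a) be initial data for the completion problem in ℂ^d, let f : [0,∞) → [0,∞) be strictly convex, and let F = (F_0, G) ∈ C_a(F_0) be a global minimizer of P_f on C_a(F_0). Then there exist a partition {J_1,…,J_p} of {1,…,k} and constants c_1 > c_2 > … > c_p > 0 such that: (1) the subfamilies G_i = {g_j}_{j ∈ J_i} span mutually orthogonal subspaces, so that S_G = ⊕_{i=1}^p S_{G_i}; (2) each frame operator S_{G_i} commutes with S_0; (3) S_F g_j = c_i g_j for every j ∈ J_i and every i ∈ {1,…,p} (i.e., every g_j is an eigenvector of S_F). -/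

import Mathlib

open Finset
open scoped ComplexOrder

noncomputable def sortAsc {m : ℕ} (x : Fin m → ℝ) : Fin m → ℝ :=
  x ∘ Tuple.sort x

noncomputable def sortDesc {m : ℕ} (x : Fin m → ℝ) : Fin m → ℝ :=
  fun i => (x ∘ Tuple.sort x) i.rev

noncomputable def pad {k : ℕ} (x : Fin k → ℝ) (m : ℕ) : Fin m → ℝ :=
  fun i => if h : (i : ℕ) < k then x ⟨i, h⟩ else 0

/-- `MajorizedBy x y` means `x ≺ y`. -/
def MajorizedBy {m : ℕ} (x y : Fin m → ℝ) : Prop :=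
  (∀ j : Fin m, ∑ i ∈ Finset.Iic j, sortDesc x i ≤ ∑ i ∈ Finset.Iic j, sortDesc y i) ∧
    ∑ i, x i = ∑ i, y i

/-- Majorization of vectors of possibly different lengths, padding with zeros. -/
def MajorizedByPad {k m : ℕ} (x : Fin k → ℝ) (y : Fin m → ℝ) : Prop :=
  MajorizedBy (pad x (max k m)) (pad y (max k m))

/-- The frame operator `S_F = ∑ f_i f_i^*` of a finite sequence of vectors in `ℂ^d`. -/
noncomputable def frameOp {d n : ℕ} (F : Fin n → Fin d → ℂ) : Matrix (Fin d) (Fin d) ℂ :=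
  ∑ l, Matrix.vecMulVec (F l) (star (F l))

/-- The squared norm `‖g‖²` of a vector in `ℂ^d`. -/
noncomputable def normSqVec {d : ℕ} (g : Fin d → ℂ) : ℝ :=
  ∑ i, Complex.normSq (g i)

open scoped Classical in
/-- Eigenvalues of a (Hermitian) matrix arranged in decreasing order. -/
noncomputable def eigsDesc {d : ℕ} (S : Matrix (Fin d) (Fin d) ℂ) : Fin d → ℝ :=
  if h : S.IsHermitian then sortDesc h.eigenvalues else 0

open scoped Classical in
/-- Eigenvalues of a (Hermitian) matrix arranged in increasing order. -/
noncomputable def eigsAsc {d : ℕ} (S : Matrix (Fin d) (Fin d) ℂ) : Fin d → ℝ :=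
  if h : S.IsHermitian then sortAsc h.eigenvalues else 0

/-- `Γ_d(a)`: non-increasing nonnegative vectors in `ℝ^d` majorizing `a`. -/
def Gamma {k : ℕ} (d : ℕ) (a : Fin k → ℝ) : Set (Fin d → ℝ) :=
  {μ | Antitone μ ∧ (∀ i, 0 ≤ μ i) ∧ MajorizedByPad a μ}

/-- The convex potential `P_f = tr f(S) = ∑ f(λ_i(S))`. -/
noncomputable def potential {d : ℕ} (f : ℝ → ℝ) (S : Matrix (Fin d) (Fin d) ℂ) : ℝ :=
  ∑ i, f (eigsDesc S i)

/-- Final averages `Q_{j,r} = (1/(r-j)) (∑_{i=j+1}^k a_i + ∑_{i=j+1}^r λ_i)` (1-based). -/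
noncomputable def finalAvg {d k : ℕ} (lam : Fin d → ℝ) (a : Fin k → ℝ) (j r : ℕ) : ℝ :=
  ((∑ i : Fin k, if j ≤ (i : ℕ) then a i else 0) +
      (∑ i : Fin d, if j ≤ (i : ℕ) ∧ (i : ℕ) < r then lam i else 0)) / ((r : ℝ) - (j : ℝ))

/-- Initial averages: `initAvg lam a lo hi = P_{lo+1,hi}` (1-based), i.e. the average of
`h_i = λ_i + a_i` over the (0-based) index window `[lo, hi)`. -/
noncomputable def initAvg {d k : ℕ} (lam : Fin d → ℝ) (a : Fin k → ℝ) (lo hi : ℕ) : ℝ :=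
  ((∑ i : Fin d, if lo ≤ (i : ℕ) ∧ (i : ℕ) < hi then lam i else 0) +
      (∑ i : Fin k, if lo ≤ (i : ℕ) ∧ (i : ℕ) < hi then a i else 0)) / ((hi : ℝ) - (lo : ℝ))

/-- 1-based access to a vector indexed by `Fin d`. -/
noncomputable def get1 {d : ℕ} (lam : Fin d → ℝ) (i : ℕ) : ℝ :=
  if h : i - 1 < d then lam ⟨i - 1, h⟩ else 0

/-- The index `s` is feasible for the pair `(λ, a)`: the unique vector
`ν_s = (c·1_{r-s}, λ_{r+1},…,λ_d)` determined by the truncated data satisfies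
`a^s ≺ ν_s - λ^s`. -/
def FeasibleIdx {d k : ℕ} (lam : Fin d → ℝ) (a : Fin k → ℝ) (s : ℕ) : Prop :=
  ∃ r : ℕ, ∃ c : ℝ, s < r ∧ r ≤ d ∧ 0 < c ∧
    (∀ i : Fin d, s ≤ (i : ℕ) → (i : ℕ) < r → lam i ≤ c) ∧
    (∀ hrd : r < d, c ≤ lam ⟨r, hrd⟩) ∧
    ((r : ℝ) - (s : ℝ)) * c =
      (∑ i : Fin d, if s ≤ (i : ℕ) ∧ (i : ℕ) < r then lam i else 0) +
        (∑ i : Fin k, if s ≤ (i : ℕ) then a i else 0) ∧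
    MajorizedByPad (fun i : Fin (k - s) => a ⟨s + (i : ℕ), by have := i.isLt; omega⟩)
      (fun i : Fin (d - s) =>
        if s + (i : ℕ) < r then c - lam ⟨s + (i : ℕ), by have := i.isLt; omega⟩ else 0)


section Aux
open Matrix

lemma aux_convex (f : ℝ → ℝ) (hf : StrictConvexOn ℝ (Set.Ici 0) f) (y : ℝ) (hy : 0 < y) :
    ∃ s : ℝ, ∀ t v : ℝ, 0 ≤ t → 0 ≤ v → ((y ≤ t ∧ t ≤ v) ∨ (v ≤ t ∧ t ≤ y)) → t ≠ v →
      s * (v - t) < f v - f t := by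
  have hyI : y ∈ interior (Set.Ici (0:ℝ)) := by simpa using hy
  have hyS : y ∈ Set.Ici (0:ℝ) := hy.le
  set s := derivWithin f (Set.Ioi y) y with hs
  have hR : ∀ t, y < t → s * (t - y) < f t - f y := by
    intro t ht
    have htS : t ∈ Set.Ici (0:ℝ) := (hy.trans ht).le
    set m := (y + t) / 2 with hm
    have hmS : m ∈ Set.Ici (0:ℝ) := by simp only [Set.mem_Ici]; linarith
    have hym : y < m := by linarith
    have hmt : m < t := by linarith
    have h1 := hf.convexOn.rightDeriv_le_slope_of_mem_interior hyI hmS hym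
    have h2 := hf.slope_strict_mono_adjacent hyS htS hym hmt
    rw [slope_def_field] at h1
    rw [le_div_iff₀ (by linarith)] at h1
    rw [div_lt_div_iff₀ (by linarith) (by linarith)] at h2
    have e1 : t - m = (t - y) / 2 := by rw [hm]; ring
    have e2 : m - y = (t - y) / 2 := by rw [hm]; ring
    rw [e1, e2] at h2
    rw [e2] at h1
    have h3 : f m - f y < f t - f m := by
      have : 0 < (t - y)/2 := by linarith
      exact lt_of_mul_lt_mul_right h2 this.le
    linarith
  have hL : ∀ t, 0 ≤ t → t < y → s * (t - y) < f t - f y := by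
    intro t ht0 ht
    have htS : t ∈ Set.Ici (0:ℝ) := ht0
    set m := (y + t) / 2 with hm
    have hmS : m ∈ Set.Ici (0:ℝ) := by simp only [Set.mem_Ici]; linarith
    have hym : t < m := by linarith
    have hmt : m < y := by linarith
    have h0 := hf.convexOn.leftDeriv_le_rightDeriv_of_mem_interior hyI
    have h1 := hf.convexOn.slope_le_leftDeriv_of_mem_interior hmS hyI hmt
    have h1 := h1.trans h0
    have h2 := hf.slope_strict_mono_adjacent htS hyS hym hmt
    rw [slope_def_field] at h1
    rw [div_le_iff₀ (by linarith)] at h1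
    rw [div_lt_div_iff₀ (by linarith) (by linarith)] at h2
    have e1 : y - m = (y - t) / 2 := by rw [hm]; ring
    have e2 : m - t = (y - t) / 2 := by rw [hm]; ring
    rw [e1, e2] at h2
    rw [e1] at h1
    have h3 : f m - f t < f y - f m := by
      have : 0 < (y - t)/2 := by linarith
      exact lt_of_mul_lt_mul_right h2 this.le
    change f y - f m ≤ s * _ at h1
    linarith
  refine ⟨s, fun t v ht hv h hne => ?_⟩
  rcases h with ⟨h1, h2⟩ | ⟨h1, h2⟩
  · have h2' := lt_of_le_of_ne h2 hne
    rcases h1.eq_or_lt with rfl | h1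
    · exact hR v h2'
    · have a1 := hR t h1
      have a2 := hf.slope_strict_mono_adjacent hyS hv h1 h2'
      have a3 : s < (f t - f y) / (t - y) := by rwa [lt_div_iff₀ (by linarith)]
      have a4 := a3.trans a2
      rwa [lt_div_iff₀ (by linarith)] at a4
  · have h1' := lt_of_le_of_ne h1 (Ne.symm hne)
    rcases h2.eq_or_lt with rfl | h2
    · exact hL v hv h1'
    · have a1 := hL t ht h2
      have a2 := hf.slope_strict_mono_adjacent hv hyS h1' h2
      have a3 : (f y - f t) / (y - t) < s := by
        rw [div_lt_iff₀ (by linarith)]; linarith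
      have a4 := a2.trans a3
      rw [div_lt_iff₀ (by linarith)] at a4
      linarith

lemma aux_scalar {n : ℕ} (f : ℝ → ℝ) (hf : StrictConvexOn ℝ (Set.Ici 0) f)
    (lam nu : Fin (n+1) → ℝ) (a : ℝ) (ha : 0 < a) (hlam : Antitone lam)
    (hl0 : ∀ i, 0 ≤ lam i) (h1 : ∀ i, lam i ≤ nu i)
    (h2 : ∀ i : Fin n, nu i.succ ≤ lam i.castSucc)
    (hsum : ∑ i, nu i = ∑ i, lam i + a)
    (hle : ∑ i, f (nu i) ≤ (∑ i : Fin n, f (lam i.castSucc)) + f (lam (Fin.last n) + a)) :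
    ∑ i, nu i ^ 2 = (∑ i : Fin n, lam i.castSucc ^ 2) + (lam (Fin.last n) + a) ^ 2 := by
  set y := lam (Fin.last n) + a with hy
  have hy0 : 0 < y := by have := hl0 (Fin.last n); linarith
  have hn0 : ∀ i, 0 ≤ nu i := fun i => (hl0 i).trans (h1 i)
  obtain ⟨s, hs⟩ := aux_convex f hf y hy0
  have hex : ∃ m : ℕ, ∀ i : Fin n, m ≤ (i : ℕ) → lam i.castSucc ≤ y :=
    ⟨n, fun i hi => by omega⟩
  classical
  obtain ⟨m, hmn, hm1, hm2⟩ : ∃ m : Fin (n+1), True ∧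
      (∀ i : Fin n, m ≤ i.castSucc → lam i.castSucc ≤ y) ∧
      (∀ i : Fin n, i.castSucc < m → y ≤ lam i.castSucc) := by
    have hfle : Nat.find hex ≤ n := Nat.find_min' hex (fun i hi => by omega)
    refine ⟨⟨Nat.find hex, by omega⟩, trivial, fun i hi => Nat.find_spec hex i hi, fun i hi => ?_⟩
    have := Nat.find_min hex (m := (i : ℕ)) hi
    push Not at this
    obtain ⟨j, hj, hj2⟩ := this
    have hij : i.castSucc ≤ j.castSucc := hj
    exact hj2.le.trans (hlam hij)
  have key : ∀ i : Fin n, ((y ≤ lam i.castSucc ∧ lam i.castSucc ≤ nu (m.succAbove i)) ∨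
      (nu (m.succAbove i) ≤ lam i.castSucc ∧ lam i.castSucc ≤ y)) := by
    intro i
    rcases lt_or_ge i.castSucc m with h | h
    · left; rw [Fin.succAbove_of_castSucc_lt _ _ h]; exact ⟨hm2 i h, h1 _⟩
    · right; rw [Fin.succAbove_of_le_castSucc _ _ h]; exact ⟨h2 _, hm1 i h⟩
  rw [Fin.sum_univ_succAbove _ m] at hle hsum ⊢
  rw [Fin.sum_univ_castSucc lam] at hsum
  have g1 : ∀ i : Fin n, s * (nu (m.succAbove i) - lam i.castSucc) ≤
      f (nu (m.succAbove i)) - f (lam i.castSucc) := by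
    intro i
    by_cases h : lam i.castSucc = nu (m.succAbove i)
    · rw [h]; simp
    · exact (hs _ _ (hl0 _) (hn0 _) (key i) h).le
  have g2 : s * (nu m - y) ≤ f (nu m) - f y := by
    by_cases h : y = nu m
    · rw [h]; simp
    · refine (hs _ _ hy0.le (hn0 _) ?_ h).le
      rcases le_total y (nu m) with h | h
      · exact Or.inl ⟨le_rfl, h⟩
      · exact Or.inr ⟨h, le_rfl⟩
  have hz : (nu m - y) + ∑ i : Fin n, (nu (m.succAbove i) - lam i.castSucc) = 0 := by
    rw [Finset.sum_sub_distrib]; linarith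
  have hz2 : s * (nu m - y) + ∑ i : Fin n, s * (nu (m.succAbove i) - lam i.castSucc) = 0 := by
    rw [← Finset.mul_sum, ← mul_add, hz, mul_zero]
  have hle2 : (f (nu m) - f y) + ∑ i : Fin n, (f (nu (m.succAbove i)) - f (lam i.castSucc)) ≤ 0 := by
    rw [Finset.sum_sub_distrib]; linarith
  have all : ∀ i : Fin n, nu (m.succAbove i) = lam i.castSucc := by
    by_contra hcon
    push Not at hcon
    obtain ⟨i, hi⟩ := hcon
    have := Finset.sum_lt_sum (fun i _ => g1 i) (s := Finset.univ)
      ⟨i, Finset.mem_univ _, hs _ _ (hl0 _) (hn0 _) (key i) (Ne.symm hi)⟩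
    linarith
  simp only [all, sub_self, Finset.sum_const_zero, add_zero] at hz ⊢
  have : nu m = y := by linarith
  rw [this]; ring

lemma aux_quad {n : ℕ} (U : Matrix (Fin n) (Fin n) ℂ) (lam : Fin n → ℝ) (x : Fin n → ℂ) :
    star x ⬝ᵥ ((U * diagonal (fun i => (lam i : ℂ)) * Uᴴ) *ᵥ x) =
      ((∑ i, lam i * Complex.normSq ((Uᴴ *ᵥ x) i) : ℝ) : ℂ) := by
  rw [← mulVec_mulVec, ← mulVec_mulVec, dotProduct_mulVec]
  have : star x ᵥ* U = star (Uᴴ *ᵥ x) := by rw [star_mulVec, conjTranspose_conjTranspose]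
  rw [this]
  push_cast
  simp only [dotProduct, mulVec_diagonal, Pi.star_apply]
  refine Finset.sum_congr rfl fun i _ => ?_
  rw [Complex.normSq_eq_conj_mul_self]
  simp only [RCLike.star_def]
  ring

lemma aux_norm {n : ℕ} (U : Matrix (Fin n) (Fin n) ℂ) (hU : U * Uᴴ = 1) (x : Fin n → ℂ) :
    ∑ i, Complex.normSq ((Uᴴ *ᵥ x) i) = ∑ i, Complex.normSq (x i) := by
  have h1 := aux_quad U (fun _ => 1) x
  have h2 := aux_quad 1 (fun _ => 1) x
  simp [hU] at h1 h2
  rw [h1] at h2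
  exact_mod_cast h2

lemma aux_interlace {n r : ℕ} (A B U V : Matrix (Fin n) (Fin n) ℂ) (lam mu : Fin n → ℝ)
    (hlam : Antitone lam) (hmu : Antitone mu) (hU : U * Uᴴ = 1) (hV : V * Vᴴ = 1)
    (hA : A = U * diagonal (fun i => (lam i : ℂ)) * Uᴴ)
    (hB : B = V * diagonal (fun i => (mu i : ℂ)) * Vᴴ)
    (φ : (Fin n → ℂ) →ₗ[ℂ] (Fin r → ℂ))
    (h : ∀ x, φ x = 0 → (star x ⬝ᵥ (A *ᵥ x)).re ≤ (star x ⬝ᵥ (B *ᵥ x)).re)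
    (i j : Fin n) (hij : (j : ℕ) = i + r) : lam j ≤ mu i := by
  let L1 : (Fin n → ℂ) →ₗ[ℂ] ({l // j < l} → ℂ) :=
    LinearMap.funLeft ℂ ℂ (fun l : {l // j < l} => (l : Fin n)) ∘ₗ (Uᴴ).mulVecLin
  let L2 : (Fin n → ℂ) →ₗ[ℂ] ({l // l < i} → ℂ) :=
    LinearMap.funLeft ℂ ℂ (fun l : {l // l < i} => (l : Fin n)) ∘ₗ (Vᴴ).mulVecLin
  have hker := LinearMap.ker_ne_bot_of_finrank_lt (f := L1.prod (L2.prod φ)) (by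
    simp [Fintype.card_subtype]
    have e1 : (Finset.univ.filter (fun l => j < l)) = Finset.Ioi j := by ext; simp
    have e2 : (Finset.univ.filter (fun l => l < i)) = Finset.Iio i := by ext; simp
    rw [e1, e2, Fin.card_Ioi, Fin.card_Iio]
    omega)
  obtain ⟨x, hx, hx0⟩ := (Submodule.ne_bot_iff _).1 hker
  have hx' : (L1 x, L2 x, φ x) = 0 := hx
  have k1 : L1 x = 0 := congrArg Prod.fst hx'
  have k2 : L2 x = 0 := congrArg (fun p => p.2.1) hx'
  have k3 : φ x = 0 := congrArg (fun p => p.2.2) hx'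
  have k1' : ∀ l, j < l → (Uᴴ *ᵥ x) l = 0 := fun l hl => congrFun k1 ⟨l, hl⟩
  have k2' : ∀ l, l < i → (Vᴴ *ᵥ x) l = 0 := fun l hl => congrFun k2 ⟨l, hl⟩
  have hq := h x k3
  rw [hA, hB, aux_quad, aux_quad, Complex.ofReal_re, Complex.ofReal_re] at hq
  have q1 : lam j * ∑ l, Complex.normSq (x l) ≤ ∑ l, lam l * Complex.normSq ((Uᴴ *ᵥ x) l) := by
    rw [← aux_norm U hU, Finset.mul_sum]
    refine Finset.sum_le_sum fun l _ => ?_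
    rcases lt_or_ge j l with hl | hl
    · simp [k1' l hl]
    · exact mul_le_mul_of_nonneg_right (hlam hl) (Complex.normSq_nonneg _)
  have q2 : ∑ l, mu l * Complex.normSq ((Vᴴ *ᵥ x) l) ≤ mu i * ∑ l, Complex.normSq (x l) := by
    rw [← aux_norm V hV, Finset.mul_sum]
    refine Finset.sum_le_sum fun l _ => ?_
    rcases lt_or_ge l i with hl | hl
    · simp [k2' l hl]
    · exact mul_le_mul_of_nonneg_right (hmu hl) (Complex.normSq_nonneg _)
  have hpos : 0 < ∑ l, Complex.normSq (x l) := by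
    obtain ⟨l, hl⟩ := Function.ne_iff.1 hx0
    exact Finset.sum_pos' (fun _ _ => Complex.normSq_nonneg _)
      ⟨l, Finset.mem_univ _, Complex.normSq_pos.2 hl⟩
  exact le_of_mul_le_mul_right (q1.trans (hq.trans q2)) hpos

lemma aux_sortDesc_antitone {m : ℕ} (x : Fin m → ℝ) : Antitone (sortDesc x) := by
  intro i j hij
  exact Tuple.monotone_sort x (Fin.rev_le_rev.2 hij)

lemma aux_diag {n : ℕ} (M : Matrix (Fin n) (Fin n) ℂ) (hM : M.IsHermitian) :
    ∃ U : Matrix (Fin n) (Fin n) ℂ, U * Uᴴ = 1 ∧ Uᴴ * U = 1 ∧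
      M = U * diagonal (fun i => (eigsDesc M i : ℂ)) * Uᴴ := by
  classical
  let e : Equiv.Perm (Fin n) := Fin.revPerm.trans (Tuple.sort hM.eigenvalues)
  have he : eigsDesc M = hM.eigenvalues ∘ e := by
    unfold eigsDesc; rw [dif_pos hM]; rfl
  let W : Matrix (Fin n) (Fin n) ℂ := hM.eigenvectorUnitary
  have hW1 : W * Wᴴ = 1 := (Matrix.mem_unitaryGroup_iff).1 hM.eigenvectorUnitary.2
  have hW2 : Wᴴ * W = 1 := (Matrix.mem_unitaryGroup_iff').1 hM.eigenvectorUnitary.2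
  refine ⟨W.submatrix id e, ?_, ?_, ?_⟩
  · rw [conjTranspose_submatrix, submatrix_mul_equiv, hW1, submatrix_id_id]
  · rw [conjTranspose_submatrix]
    have := submatrix_mul Wᴴ W e id e Function.bijective_id
    rw [← this, hW2, submatrix_one_equiv]
  · have hd : diagonal (fun i => (eigsDesc M i : ℂ)) =
        (diagonal (fun i => (hM.eigenvalues i : ℂ))).submatrix e e := by
      rw [submatrix_diagonal_equiv, he]; rfl
    rw [hd, conjTranspose_submatrix, submatrix_mul_equiv, submatrix_mul_equiv, submatrix_id_id]
    exact hM.spectral_theorem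

lemma aux_potential {n : ℕ} (f : ℝ → ℝ) (M U : Matrix (Fin n) (Fin n) ℂ) (τ : Fin n → ℝ)
    (hU : Uᴴ * U = 1) (hM : M = U * diagonal (fun i => (τ i : ℂ)) * Uᴴ) (hh : M.IsHermitian) :
    potential f M = ∑ i, f (τ i) := by
  obtain ⟨V, hV, hV2, hMV⟩ := aux_diag M hh
  have hc : ∀ (U : Matrix (Fin n) (Fin n) ℂ) (τ : Fin n → ℝ), Uᴴ * U = 1 →
      M = U * diagonal (fun i => (τ i : ℂ)) * Uᴴ →
      M.charpoly.roots = Multiset.map Complex.ofReal (Multiset.map τ Finset.univ.val) := by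
    intro U τ hU hM
    rw [hM, mul_assoc, charpoly_mul_comm, mul_assoc, hU, mul_one, charpoly_diagonal,
      Polynomial.roots_prod]
    · simp [Function.comp_def]
    · simp [Finset.prod_ne_zero_iff, Polynomial.X_sub_C_ne_zero]
  have := (hc V _ hV2 hMV).symm.trans (hc U τ hU hM)
  have := Multiset.map_injective Complex.ofReal_injective this
  have := congrArg (fun s => (Multiset.map f s).sum) this
  simp only [Multiset.map_map] at this
  exact this

end Aux

section Aux2
open Matrix

lemma aux_trace {n : ℕ} (U : Matrix (Fin n) (Fin n) ℂ) (hU : Uᴴ * U = 1) (τ : Fin n → ℝ) :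
    (U * diagonal (fun i => (τ i : ℂ)) * Uᴴ).trace = ((∑ i, τ i : ℝ) : ℂ) := by
  rw [trace_mul_comm, ← mul_assoc, hU, one_mul, trace_diagonal]
  push_cast; rfl

lemma aux_sq {n : ℕ} (U : Matrix (Fin n) (Fin n) ℂ) (hU : Uᴴ * U = 1) (τ : Fin n → ℝ) :
    (U * diagonal (fun i => (τ i : ℂ)) * Uᴴ) * (U * diagonal (fun i => (τ i : ℂ)) * Uᴴ) =
      U * diagonal (fun i => ((τ i ^ 2 : ℝ) : ℂ)) * Uᴴ := by
  have : (U * diagonal (fun i => (τ i : ℂ)) * Uᴴ) * (U * diagonal (fun i => (τ i : ℂ)) * Uᴴ) =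
      U * (diagonal (fun i => (τ i : ℂ)) * (Uᴴ * U) * diagonal (fun i => (τ i : ℂ))) * Uᴴ := by
    simp only [mul_assoc]
  rw [this, hU, mul_one, diagonal_mul_diagonal]
  congr 3
  funext i; push_cast; ring

lemma aux_star_dot {n : ℕ} (g : Fin n → ℂ) : star g ⬝ᵥ g = (normSqVec g : ℂ) := by
  unfold normSqVec
  push_cast
  refine Finset.sum_congr rfl fun i _ => ?_
  rw [Complex.normSq_eq_conj_mul_self]; rfl

lemma aux_core {n : ℕ} (f : ℝ → ℝ) (hf : StrictConvexOn ℝ (Set.Ici 0) f)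
    (A : Matrix (Fin (n+1)) (Fin (n+1)) ℂ) (hA : A.PosSemidef) (g : Fin (n+1) → ℂ) (a : ℝ)
    (ha : 0 < a) (hg : normSqVec g = a)
    (hmin : ∀ g', normSqVec g' = a → potential f (A + vecMulVec g (star g)) ≤
      potential f (A + vecMulVec g' (star g'))) :
    ∃ c : ℝ, 0 < c ∧ (A + vecMulVec g (star g)) *ᵥ g = (c : ℂ) • g := by
  set S := A + vecMulVec g (star g) with hS
  have hSP : S.PosSemidef := hA.add (posSemidef_vecMulVec_self_star g)
  obtain ⟨U, hU, hU', hAU⟩ := aux_diag A hA.isHermitian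
  obtain ⟨V, hV, hV', hSV⟩ := aux_diag S hSP.isHermitian
  set lam := eigsDesc A with hlam
  set nu := eigsDesc S with hnu
  have hanti : ∀ M : Matrix (Fin (n+1)) (Fin (n+1)) ℂ, M.IsHermitian → Antitone (eigsDesc M) := by
    intro M hM
    unfold eigsDesc; rw [dif_pos hM]; exact aux_sortDesc_antitone _
  have hlam_anti : Antitone lam := hanti A hA.isHermitian
  have hnu_anti : Antitone nu := hanti S hSP.isHermitian
  have hl0 : ∀ i, 0 ≤ lam i := by
    intro i
    rw [hlam]; unfold eigsDesc; rw [dif_pos hA.isHermitian]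
    exact hA.eigenvalues_nonneg _
  have hquad : ∀ x, star x ⬝ᵥ (S *ᵥ x) =
      star x ⬝ᵥ (A *ᵥ x) + ((Complex.normSq (star g ⬝ᵥ x) : ℝ) : ℂ) := by
    intro x
    rw [hS, add_mulVec, dotProduct_add, vecMulVec_mulVec]
    congr 1
    have : star x ⬝ᵥ g = star (star g ⬝ᵥ x) := by
      rw [star_dotProduct]
    rw [Complex.normSq_eq_conj_mul_self]
    simp [this, dotProduct_smul]
    ring
  have h1 : ∀ i, lam i ≤ nu i := by
    intro i
    refine aux_interlace (r := 0) A S U V lam nu hlam_anti hnu_anti hU hV hAU hSV 0 ?_ i i rfl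
    intro x _
    rw [hquad, Complex.add_re, Complex.ofReal_re]
    linarith [Complex.normSq_nonneg (star g ⬝ᵥ x)]
  have h2 : ∀ i : Fin n, nu i.succ ≤ lam i.castSucc := by
    intro i
    refine aux_interlace (r := 1) S A V U nu lam hnu_anti hlam_anti hV hU hSV hAU
      (LinearMap.pi fun _ => dotProductBilin ℂ ℂ (star g)) ?_ i.castSucc i.succ (by simp)
    intro x hx
    have hx : star g ⬝ᵥ x = 0 := congrFun hx 0
    rw [hquad, hx]; simp
  have htr1 : (vecMulVec g (star g)).trace = (a : ℂ) := by
    rw [trace_vecMulVec, dotProduct_comm, aux_star_dot, hg]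
  have hsum : ∑ i, nu i = ∑ i, lam i + a := by
    have e1 := aux_trace V hV' nu
    have e2 := aux_trace U hU' lam
    rw [← hSV, hS, trace_add, htr1, hAU, e2] at e1
    exact_mod_cast e1.symm
  -- the competitor
  let v : Fin (n+1) → ℂ := fun x => (Real.sqrt a : ℂ) * U x (Fin.last n)
  let w : Fin (n+1) → ℝ := Pi.single (Fin.last n) a
  have hvv : vecMulVec v (star v) = U * diagonal (fun i => (w i : ℂ)) * Uᴴ := by
    ext i j
    have hs : (Real.sqrt a : ℂ) * (Real.sqrt a : ℂ) = (a : ℂ) := by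
      rw [← Complex.ofReal_mul, Real.mul_self_sqrt ha.le]
    rw [mul_apply]
    simp only [vecMulVec_apply, v, Pi.star_apply, star_mul', RCLike.star_def, Complex.conj_ofReal,
      mul_diagonal, conjTranspose_apply]
    rw [Finset.sum_eq_single (Fin.last n)]
    · simp only [w, Pi.single_eq_same]
      rw [← hs]; ring
    · intro b _ hb
      simp [w, hb]
    · simp
  have hvn : normSqVec v = a := by
    have e1 : (vecMulVec v (star v)).trace = (normSqVec v : ℂ) := by
      rw [trace_vecMulVec, dotProduct_comm, aux_star_dot]
    rw [hvv, aux_trace U hU' w] at e1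
    have : ∑ i, w i = a := by simp [w]
    rw [this] at e1
    exact_mod_cast e1.symm
  have hS'U : A + vecMulVec v (star v) = U * diagonal (fun i => ((lam i + w i : ℝ) : ℂ)) * Uᴴ := by
    rw [hvv]
    conv_lhs => rw [hAU]
    rw [← add_mul, ← mul_add, diagonal_add]
    push_cast; rfl
  have hpot := hmin v hvn
  rw [aux_potential f S V nu hV' hSV hSP.isHermitian,
    aux_potential f _ U _ hU' hS'U (hA.add (posSemidef_vecMulVec_self_star v)).isHermitian,
    Fin.sum_univ_castSucc (fun i => f (lam i + w i))] at hpot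
  have hw1 : ∀ i : Fin n, w i.castSucc = 0 := by
    intro i; simp [w, Pi.single_apply, (Fin.castSucc_lt_last i).ne]
  have hw2 : w (Fin.last n) = a := by simp [w]
  simp only [hw1, hw2, add_zero] at hpot
  have hsq := aux_scalar f hf lam nu a ha hlam_anti hl0 h1 h2 hsum hpot
  have t1 : (S * S).trace = ((∑ i, nu i ^ 2 : ℝ) : ℂ) := by
    conv_lhs => rw [hSV]
    rw [aux_sq V hV', aux_trace V hV']
  have t2 : (A * A).trace = ((∑ i, lam i ^ 2 : ℝ) : ℂ) := by
    conv_lhs => rw [hAU]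
    rw [aux_sq U hU', aux_trace U hU']
  have t3 : (A * vecMulVec g (star g)).trace = star g ⬝ᵥ (A *ᵥ g) := by
    rw [mul_vecMulVec, trace_vecMulVec, dotProduct_comm]
  have t4 : (vecMulVec g (star g) * vecMulVec g (star g)).trace = (a : ℂ) * a := by
    rw [vecMulVec_mul_vecMulVec, aux_star_dot, hg, trace_vecMulVec]
    rw [dotProduct_comm, smul_dotProduct, aux_star_dot, hg]; simp
  have t5 : (S * S).trace = (A * A).trace + 2 * star g ⬝ᵥ (A *ᵥ g) + (a : ℂ) * a := by
    rw [hS, add_mul, mul_add, mul_add, trace_add, trace_add, trace_add, t4,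
      trace_mul_comm (vecMulVec g (star g)) A, t3]
    ring
  have hq : star g ⬝ᵥ (A *ᵥ g) = ((∑ i, lam i * Complex.normSq ((Uᴴ *ᵥ g) i) : ℝ) : ℂ) := by
    conv_lhs => rw [hAU]
    exact aux_quad U lam g
  rw [t1, t2, hq] at t5
  have t6 : ∑ i, nu i ^ 2 = ∑ i, lam i ^ 2 +
      2 * (∑ i, lam i * Complex.normSq ((Uᴴ *ᵥ g) i)) + a * a := by exact_mod_cast t5
  rw [hsq, Fin.sum_univ_castSucc (fun i => lam i ^ 2)] at t6
  have hN : ∑ i, Complex.normSq ((Uᴴ *ᵥ g) i) = a := by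
    rw [aux_norm U hU]; exact hg
  set L := lam (Fin.last n) with hL
  have t7 : ∑ i, (lam i - L) * Complex.normSq ((Uᴴ *ᵥ g) i) = 0 := by
    simp only [sub_mul, Finset.sum_sub_distrib, ← Finset.mul_sum, hN]
    linarith
  have t8 := (Finset.sum_eq_zero_iff_of_nonneg (fun i _ =>
    mul_nonneg (sub_nonneg.2 (hlam_anti (Fin.le_last i))) (Complex.normSq_nonneg _))).1 t7
  have t9 : diagonal (fun i => (lam i : ℂ)) *ᵥ (Uᴴ *ᵥ g) = (L : ℂ) • (Uᴴ *ᵥ g) := by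
    ext i
    rw [mulVec_diagonal, Pi.smul_apply, smul_eq_mul]
    rcases mul_eq_zero.1 (t8 i (Finset.mem_univ _)) with h | h
    · rw [sub_eq_zero.1 h]
    · rw [Complex.normSq_eq_zero.1 h]; simp
  have hAg : A *ᵥ g = (L : ℂ) • g := by
    conv_lhs => rw [hAU]
    rw [← mulVec_mulVec, ← mulVec_mulVec, t9, mulVec_smul, mulVec_mulVec, hU, one_mulVec]
  refine ⟨L + a, by linarith [hl0 (Fin.last n)], ?_⟩
  rw [hS, add_mulVec, hAg, vecMulVec_mulVec, aux_star_dot, hg]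
  ext i; simp; ring

end Aux2

section Aux3
open Matrix

lemma aux_frame_psd {d n : ℕ} (F : Fin n → Fin d → ℂ) : (frameOp F).PosSemidef :=
  posSemidef_sum _ fun l _ => posSemidef_vecMulVec_self_star (F l)

lemma aux_eig {d n₀ k : ℕ} (F₀ : Fin n₀ → Fin d → ℂ) (a : Fin k → ℝ)
    (ha_pos : ∀ i, 0 < a i)
    (f : ℝ → ℝ) (hf : StrictConvexOn ℝ (Set.Ici 0) f)
    (G : Fin k → Fin d → ℂ) (hG : ∀ i, normSqVec (G i) = a i)
    (hmin : ∀ G' : Fin k → Fin d → ℂ, (∀ i, normSqVec (G' i) = a i) →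
      potential f (frameOp F₀ + frameOp G) ≤ potential f (frameOp F₀ + frameOp G')) (l : Fin k) :
    ∃ c : ℝ, 0 < c ∧ (frameOp F₀ + frameOp G) *ᵥ (G l) = (c : ℂ) • G l := by
  classical
  obtain _ | n := d
  · exact ⟨1, one_pos, Subsingleton.elim _ _⟩
  set A := frameOp F₀ + ∑ i ∈ Finset.univ.erase l, vecMulVec (G i) (star (G i)) with hA
  have hAP : A.PosSemidef := (aux_frame_psd F₀).add
    (posSemidef_sum _ fun i _ => posSemidef_vecMulVec_self_star (G i))
  have hup : ∀ g', frameOp F₀ + frameOp (Function.update G l g') =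
      A + vecMulVec g' (star g') := by
    intro g'
    have : frameOp (Function.update G l g') =
        ∑ i ∈ Finset.univ.erase l, vecMulVec (G i) (star (G i)) + vecMulVec g' (star g') := by
      unfold frameOp
      rw [← Finset.sum_erase_add _ _ (Finset.mem_univ l), Function.update_self]
      congr 1
      refine Finset.sum_congr rfl fun i hi => ?_
      rw [Function.update_of_ne (Finset.ne_of_mem_erase hi)]
    rw [this, hA, add_assoc]
  have hself := hup (G l)
  rw [Function.update_eq_self] at hself
  rw [hself]
  refine aux_core f hf A hAP (G l) (a l) (ha_pos l) (hG l) fun g' hg' => ?_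
  rw [← hself, ← hup]
  refine hmin _ fun i => ?_
  by_cases h : i = l
  · subst h; simpa using hg'
  · rw [Function.update_of_ne h]; exact hG i

end Aux3

open Matrix in
theorem stmt_6 {d n₀ k : ℕ} (F₀ : Fin n₀ → Fin d → ℂ) (a : Fin k → ℝ)
    (ha_pos : ∀ i, 0 < a i) (ha_mono : Antitone a)
    (hk : d - (frameOp F₀).rank ≤ k)
    (f : ℝ → ℝ) (hf : StrictConvexOn ℝ (Set.Ici 0) f) (hf0 : ∀ x ∈ Set.Ici (0 : ℝ), 0 ≤ f x)
    (G : Fin k → Fin d → ℂ) (hG : ∀ i, normSqVec (G i) = a i)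
    (hmin : ∀ G' : Fin k → Fin d → ℂ, (∀ i, normSqVec (G' i) = a i) →
      potential f (frameOp F₀ + frameOp G) ≤ potential f (frameOp F₀ + frameOp G')) :
    ∃ (p : ℕ) (J : Fin p → Finset (Fin k)) (c : Fin p → ℝ),
      (∀ i, (J i).Nonempty) ∧
      (∀ l : Fin k, ∃! i : Fin p, l ∈ J i) ∧
      StrictAnti c ∧ (∀ i, 0 < c i) ∧
      (∀ i j : Fin p, i ≠ j → ∀ l ∈ J i, ∀ h ∈ J j,
        ∑ x, (starRingEnd ℂ) (G l x) * G h x = 0) ∧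
      (∀ i : Fin p, frameOp F₀ * (∑ l ∈ J i, Matrix.vecMulVec (G l) (star (G l))) =
        (∑ l ∈ J i, Matrix.vecMulVec (G l) (star (G l))) * frameOp F₀) ∧
      (∀ i : Fin p, ∀ l ∈ J i,
        (frameOp F₀ + frameOp G).mulVec (G l) = (c i : ℂ) • G l) := by
  classical
  set S := frameOp F₀ + frameOp G with hS
  have hSH : S.IsHermitian := ((aux_frame_psd F₀).add (aux_frame_psd G)).isHermitian
  have hev := aux_eig F₀ a ha_pos f hf G hG hmin
  choose c hc0 hc using hev
  let T : Finset ℝ := Finset.univ.image c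
  let e : Fin T.card ↪o ℝ := T.orderEmbOfFin rfl
  have horth : ∀ l h, c l ≠ c h → star (G l) ⬝ᵥ G h = 0 := by
    intro l h hne
    have e1 : star (G l) ⬝ᵥ (S *ᵥ G h) = (c h : ℂ) * (star (G l) ⬝ᵥ G h) := by
      rw [hc h, dotProduct_smul, smul_eq_mul]
    have e2 : star (G l) ⬝ᵥ (S *ᵥ G h) = (c l : ℂ) * (star (G l) ⬝ᵥ G h) := by
      rw [dotProduct_mulVec]
      have : star (G l) ᵥ* S = star (S *ᵥ G l) := by rw [star_mulVec, hSH.eq]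
      rw [this, hc l, star_smul, smul_dotProduct]
      simp
    have e3 : ((c l : ℂ) - c h) * (star (G l) ⬝ᵥ G h) = 0 := by
      rw [sub_mul, ← e1, ← e2, sub_self]
    rcases mul_eq_zero.1 e3 with h' | h'
    · exact absurd (by exact_mod_cast sub_eq_zero.1 h') hne
    · exact h'
  refine ⟨T.card, fun i => Finset.univ.filter (fun l => c l = e i.rev), fun i => e i.rev,
    ?_, ?_, ?_, ?_, ?_, ?_, ?_⟩
  · intro i
    have : e i.rev ∈ T := T.orderEmbOfFin_mem rfl _
    obtain ⟨l, _, hl⟩ := Finset.mem_image.1 this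
    exact ⟨l, by simp [hl]⟩
  · intro l
    have hl : c l ∈ Set.range e := by
      rw [Finset.range_orderEmbOfFin]; simp [T]
    obtain ⟨i, hi⟩ := hl
    refine ⟨i.rev, by simp [hi], ?_⟩
    intro j hj
    simp only [Finset.mem_filter, Finset.mem_univ, true_and] at hj
    rw [← hi] at hj
    have := e.injective hj
    rw [this, Fin.rev_rev]
  · intro i j hij
    exact e.strictMono (Fin.rev_lt_rev.2 hij)
  · intro i
    have : e i.rev ∈ T := T.orderEmbOfFin_mem rfl _
    obtain ⟨l, _, hl⟩ := Finset.mem_image.1 this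
    change 0 < e i.rev
    rw [← hl]; exact hc0 l
  · intro i j hij l hl h hh
    simp only [Finset.mem_filter, Finset.mem_univ, true_and] at hl hh
    refine horth l h ?_
    rw [hl, hh]
    intro heq
    exact hij (Fin.rev_injective (e.injective heq))
  · intro i
    set t := e i.rev
    set P := ∑ l ∈ Finset.univ.filter (fun l => c l = t), vecMulVec (G l) (star (G l)) with hP
    have hSP : S * P = (t : ℂ) • P := by
      rw [hP, Finset.mul_sum, Finset.smul_sum]
      refine Finset.sum_congr rfl fun l hl => ?_
      simp only [Finset.mem_filter, Finset.mem_univ, true_and] at hl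
      rw [mul_vecMulVec, hc l, hl, smul_vecMulVec]
    have hPS : P * S = (t : ℂ) • P := by
      rw [hP, Finset.sum_mul, Finset.smul_sum]
      refine Finset.sum_congr rfl fun l hl => ?_
      simp only [Finset.mem_filter, Finset.mem_univ, true_and] at hl
      have : star (G l) ᵥ* S = star (S *ᵥ G l) := by rw [star_mulVec, hSH.eq]
      rw [vecMulVec_mul, this, hc l, hl, star_smul, vecMulVec_smul]
      simp
    have hsplit : frameOp G = P +
        ∑ l ∈ Finset.univ.filter (fun l => ¬ c l = t), vecMulVec (G l) (star (G l)) := by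
      rw [hP, Finset.sum_filter_add_sum_filter_not]; rfl
    have hz1 : (∑ l ∈ Finset.univ.filter (fun l => ¬ c l = t),
        vecMulVec (G l) (star (G l))) * P = 0 := by
      rw [hP, Finset.sum_mul_sum]
      refine Finset.sum_eq_zero fun l hl => Finset.sum_eq_zero fun h hh => ?_
      simp only [Finset.mem_filter, Finset.mem_univ, true_and] at hl hh
      rw [vecMulVec_mul_vecMulVec, horth l h (by rw [hh]; exact hl)]
      simp
    have hz2 : P * (∑ l ∈ Finset.univ.filter (fun l => ¬ c l = t),
        vecMulVec (G l) (star (G l))) = 0 := by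
      rw [hP, Finset.sum_mul_sum]
      refine Finset.sum_eq_zero fun l hl => Finset.sum_eq_zero fun h hh => ?_
      simp only [Finset.mem_filter, Finset.mem_univ, true_and] at hl hh
      rw [vecMulVec_mul_vecMulVec, horth l h (by rw [hl]; exact Ne.symm hh)]
      simp
    have hF : frameOp F₀ = S - frameOp G := by rw [hS]; abel
    rw [hF, sub_mul, mul_sub, hSP, hPS, hsplit, add_mul, mul_add, hz1, hz2]
  · intro i l hl
    simp only [Finset.mem_filter, Finset.mem_univ, true_and] at hl
    rw [hc l, hl]
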